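/- arXiv:1406.3327 — 6 statements merged into one kernel-verified Lean document; each statement's English description precedes it below -/
import Mathlib

section
/- The naïve Boston mechanism is not weakly strategyproof: there exist a setting (namely 4 agents and 4 objects, each object of capacity 1), a type profile t = (t_i, t_{-i}), an agent i, and a misreport t_i' ∈ T such that the allocation vector NBM_i(t_i', t_{-i}) strictly first-order stochastically dominates the truthful allocation vector NBM_i(t_i, t_{-i}) with respect to i's true type t_i. -/
/-!
Write the objects as `0, 1, 2, 3`. Agents `0` and `1` rank them `0 ≻ 1 ≻ 2 ≻ 3`, agents `2` and `3`
rank them `1 ≻ 2 ≻ 0 ≻ 3`. In the first round objects `0` and `1` are both taken. A truthful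
agent `0` who lost object `0` wastes the second round on the exhausted object `1`, while the loser
among agents `2, 3` takes object `2`; so agent `0` ends up with object `3`. Its allocation is
`(1/2, 0, 0, 1/2)`. Reporting `0 ≻ 2 ≻ 1 ≻ 3` leaves the first round unchanged, but lets agent `0`
compete for object `2` in the second round. Of the 12 priority orderings in which it loses object
`0`, it also loses object `2` exactly in the 6 that place it last, and wins it in the other 6. The
allocation becomes `(1/2, 0, 1/4, 1/4)`, which strictly dominates.
-/

open Finset

/-- A preference type (strict ranking of the `m` objects): `t k` is the object
ranked `k`-th (0-indexed).  Object `a` is preferred to `b` iff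
`t.symm a < t.symm b`. -/
abbrev Pref (m : ℕ) := Fin m ≃ Fin m

/-- One round of a Boston-style mechanism: the agents in `order` (highest priority
first) that are not yet assigned apply to `choice i`; an applicant receives a copy
iff the remaining capacity of its chosen object is still positive. -/
def applyRound {n m : ℕ} (choice : Fin n → Option (Fin m)) (order : List (Fin n))
    (st : (Fin n → Option (Fin m)) × (Fin m → ℕ)) :
    (Fin n → Option (Fin m)) × (Fin m → ℕ) :=
  order.foldl
    (fun s i =>
      match s.1 i with
      | some _ => s
      | none =>
        match choice i with
        | none => s
        | some j =>
          if 0 < s.2 j then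
            (Function.update s.1 i (some j), Function.update s.2 j (s.2 j - 1))
          else s)
    st

/-- The list of agents in order of priority under `π` (the agent with `π i = 0` first). -/
def priorityList {n : ℕ} (π : Equiv.Perm (Fin n)) : List (Fin n) :=
  (List.finRange n).map π.symm

/-- The most preferred object (under `ti`) among the objects with positive
remaining capacity, if any such object exists. -/
def favorite {m : ℕ} (ti : Pref m) (cap : Fin m → ℕ) : Option (Fin m) :=
  ((List.finRange m).find? (fun k => decide (0 < cap (ti k)))).map ti

/-- The naïve Boston mechanism for a fixed priority ordering `π`: in round `k`
every not-yet-assigned agent applies to its `k`-th ranked object. -/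
def NBMassign {n m : ℕ} (q : Fin m → ℕ) (t : Fin n → Pref m) (π : Equiv.Perm (Fin n)) :
    Fin n → Option (Fin m) :=
  ((List.finRange m).foldl
    (fun st k => applyRound (fun i => some (t i k)) (priorityList π) st)
    ((fun _ => none), q)).1

/-- The adaptive Boston mechanism for a fixed priority ordering `π`: in every round
each not-yet-assigned agent applies to its most preferred object among the objects
with strictly positive remaining capacity (at the beginning of the round). -/
def ABMassign {n m : ℕ} (q : Fin m → ℕ) (t : Fin n → Pref m) (π : Equiv.Perm (Fin n)) :
    Fin n → Option (Fin m) :=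
  ((fun st => applyRound (fun i => favorite (t i) st.2) (priorityList π) st)^[n]
    ((fun _ => none), q)).1

/-- The serial dictatorship for a fixed priority ordering `π`: agents are processed
in order of priority, each receiving one copy of its most preferred object among
those with remaining capacity. -/
def SDassign {n m : ℕ} (q : Fin m → ℕ) (t : Fin n → Pref m) (π : Equiv.Perm (Fin n)) :
    Fin n → Option (Fin m) :=
  ((priorityList π).foldl
    (fun s i =>
      match favorite (t i) s.2 with
      | none => s
      | some j => (Function.update s.1 i (some j), Function.update s.2 j (s.2 j - 1)))
    ((fun _ => none), q)).1

/-- The (deterministic) allocation matrix induced by an assignment of objects to agents. -/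
def detAlloc {n m : ℕ} (a : Fin n → Option (Fin m)) : Fin n → Fin m → ℝ :=
  fun i j => if a i = some j then 1 else 0

/-- The naïve Boston mechanism: the average of `NBMassign` over all `n!` priority orderings. -/
noncomputable def NBM {n m : ℕ} (q : Fin m → ℕ) (t : Fin n → Pref m) : Fin n → Fin m → ℝ :=
  fun i j => (∑ π : Equiv.Perm (Fin n), detAlloc (NBMassign q t π) i j) / (Nat.factorial n)

/-- The adaptive Boston mechanism: the average of `ABMassign` over all `n!` priority orderings. -/
noncomputable def ABM {n m : ℕ} (q : Fin m → ℕ) (t : Fin n → Pref m) : Fin n → Fin m → ℝ :=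
  fun i j => (∑ π : Equiv.Perm (Fin n), detAlloc (ABMassign q t π) i j) / (Nat.factorial n)

/-- Random serial dictatorship: the average of `SDassign` over all `n!` priority orderings. -/
noncomputable def RSD {n m : ℕ} (q : Fin m → ℕ) (t : Fin n → Pref m) : Fin n → Fin m → ℝ :=
  fun i j => (∑ π : Equiv.Perm (Fin n), detAlloc (SDassign q t π) i j) / (Nat.factorial n)

/-- `x` is an allocation for capacities `q`. -/
def IsAlloc {n m : ℕ} (q : Fin m → ℕ) (x : Fin n → Fin m → ℝ) : Prop :=
  (∀ i j, 0 ≤ x i j ∧ x i j ≤ 1) ∧ (∀ i, ∑ j, x i j = 1) ∧ ∀ j, ∑ i, x i j ≤ q j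

/-- First-order stochastic dominance of `v` over `w` with respect to the ranking `ti`. -/
def FOSD {m : ℕ} (ti : Pref m) (v w : Fin m → ℝ) : Prop :=
  ∀ K : Fin m, ∑ k ∈ Finset.Iic K, w (ti k) ≤ ∑ k ∈ Finset.Iic K, v (ti k)

/-- Strict first-order stochastic dominance. -/
def StrictFOSD {m : ℕ} (ti : Pref m) (v w : Fin m → ℝ) : Prop :=
  FOSD ti v w ∧ ∃ K : Fin m, ∑ k ∈ Finset.Iic K, w (ti k) < ∑ k ∈ Finset.Iic K, v (ti k)

/-- `x` ordinally dominates `y` at type profile `t`. -/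
def OrdDom {n m : ℕ} (t : Fin n → Pref m) (x y : Fin n → Fin m → ℝ) : Prop :=
  ∀ i, FOSD (t i) (x i) (y i)

/-- `x` strictly ordinally dominates `y` at type profile `t`. -/
def StrictOrdDom {n m : ℕ} (t : Fin n → Pref m) (x y : Fin n → Fin m → ℝ) : Prop :=
  OrdDom t x y ∧ ∃ i : Fin n, ∃ K : Fin m,
    ∑ k ∈ Finset.Iic K, y i (t i k) < ∑ k ∈ Finset.Iic K, x i (t i k)

/-- The rank distribution of allocation `x` at profile `t`: `rankDist t x k` is the
expected number of `k`-th (0-indexed) choices allocated. -/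
noncomputable def rankDist {n m : ℕ} (t : Fin n → Pref m) (x : Fin n → Fin m → ℝ)
    (k : Fin m) : ℝ :=
  ∑ i, x i (t i k)

/-- `x` weakly rank dominates `y` at profile `t`. -/
def WeakRankDom {n m : ℕ} (t : Fin n → Pref m) (x y : Fin n → Fin m → ℝ) : Prop :=
  ∀ K : Fin m, ∑ k ∈ Finset.Iic K, rankDist t y k ≤ ∑ k ∈ Finset.Iic K, rankDist t x k

/-- `x` strictly rank dominates `y` at profile `t`. -/
def StrictRankDom {n m : ℕ} (t : Fin n → Pref m) (x y : Fin n → Fin m → ℝ) : Prop :=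
  WeakRankDom t x y ∧ ∃ K : Fin m,
    ∑ k ∈ Finset.Iic K, rankDist t y k < ∑ k ∈ Finset.Iic K, rankDist t x k

/-- Feasibility of a deterministic (total) assignment. -/
def Feasible {n m : ℕ} (q : Fin m → ℕ) (y : Fin n → Fin m) : Prop :=
  ∀ j, (Finset.univ.filter fun i => y i = j).card ≤ q j

/-- Ex-post efficiency at `t` of a deterministic assignment `a`: no feasible
deterministic assignment makes every agent weakly better off and some agent
strictly better off. -/
def ExPostEfficientAt {n m : ℕ} (q : Fin m → ℕ) (t : Fin n → Pref m)
    (a : Fin n → Option (Fin m)) : Prop :=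
  ¬ ∃ y : Fin n → Fin m, Feasible q y ∧
      (∀ i j, a i = some j → (t i).symm (y i) ≤ (t i).symm j) ∧
      ∃ i j, a i = some j ∧ (t i).symm (y i) < (t i).symm j

/-- The expected number of allocated first choices under `x` at profile `t`. -/
noncomputable def d1 {n m : ℕ} (t : Fin n → Pref m) (x : Fin n → Fin m → ℝ) : ℝ :=
  ∑ i, ∑ j, if ((t i).symm j : ℕ) = 0 then x i j else 0

/-- `x` is first-choice-maximizing at profile `t`. -/
def FirstChoiceMax {n m : ℕ} (q : Fin m → ℕ) (t : Fin n → Pref m)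
    (x : Fin n → Fin m → ℝ) : Prop :=
  IsAlloc q x ∧ ∀ y : Fin n → Fin m → ℝ, IsAlloc q y → d1 t y ≤ d1 t x

/-- `u` is a vNM utility function consistent with the ranking `ti`. -/
def Consistent {m : ℕ} (ti : Pref m) (u : Fin m → ℝ) : Prop :=
  ∀ a b : Fin m, ti.symm a < ti.symm b → u b < u a

/-- Uniformly relatively bounded indifference with bound `r`. -/
def URBI {m : ℕ} (r : ℝ) (u : Fin m → ℝ) : Prop :=
  ∀ a b : Fin m, u b < u a → u b - (⨅ j, u j) ≤ r * (u a - (⨅ j, u j))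

/-- The ranking `1 ≻ 2 ≻ 0 ≻ 3` of agents `2` and `3`. -/
def rank1203 : Pref 4 where
  toFun := ![1, 2, 0, 3]
  invFun := ![2, 0, 1, 3]
  left_inv := by decide
  right_inv := by decide

/-- The truthful profile; `Equiv.refl` is the ranking `0 ≻ 1 ≻ 2 ≻ 3`. -/
def truthProfile : Fin 4 → Pref 4 :=
  ![Equiv.refl _, Equiv.refl _, rank1203, rank1203]

/-- The profile in which agent `0` reports `0 ≻ 2 ≻ 1 ≻ 3` instead. -/
def misreportProfile : Fin 4 → Pref 4 :=
  Function.update truthProfile 0 (Equiv.swap 1 2)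

/-- An entry of the naïve Boston allocation is the fraction of priority orderings under which the
agent gets the object. -/
lemma NBM_eq_card {n m : ℕ} (q : Fin m → ℕ) (t : Fin n → Pref m) (i : Fin n) (j : Fin m) :
    NBM q t i j =
      (#{π : Equiv.Perm (Fin n) | NBMassign q t π i = some j} : ℝ) / (Nat.factorial n) := by
  simp [NBM, detAlloc]

lemma card_truth : ∀ j : Fin 4,
    #{π : Equiv.Perm (Fin 4) | NBMassign (fun _ => 1) truthProfile π 0 = some j} =
      ![12, 0, 0, 12] j := by
  decide +kernel

lemma card_misreport : ∀ j : Fin 4,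
    #{π : Equiv.Perm (Fin 4) | NBMassign (fun _ => 1) misreportProfile π 0 = some j} =
      ![12, 0, 6, 6] j := by
  decide +kernel

lemma NBM_truth : NBM (fun _ => 1) truthProfile 0 = ![1/2, 0, 0, 1/2] := by
  funext j
  rw [NBM_eq_card, card_truth]
  fin_cases j <;> norm_num [Nat.factorial]

lemma NBM_misreport : NBM (fun _ => 1) misreportProfile 0 = ![1/2, 0, 1/4, 1/4] := by
  funext j
  rw [NBM_eq_card, card_misreport]
  fin_cases j <;> norm_num [Nat.factorial]

/-- The naïve Boston mechanism is not weakly strategyproof: in the setting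
with 4 agents and 4 objects of unit capacity there are a type profile `t`, an agent `i`
and a misreport `ti'` such that `i`'s allocation under the misreport strictly
first-order stochastically dominates its truthful allocation w.r.t. `t i`. -/
theorem nbm_not_weakly_strategyproof :
    ∃ (t : Fin 4 → Pref 4) (i : Fin 4) (ti' : Pref 4),
      StrictFOSD (t i)
        (NBM (fun _ => 1) (Function.update t i ti') i)
        (NBM (fun _ => 1) t i) := by
  refine ⟨truthProfile, 0, Equiv.swap 1 2, ?_⟩
  change StrictFOSD (Equiv.refl _) (NBM (fun _ => 1) misreportProfile 0) _
  rw [NBM_truth, NBM_misreport]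
  have h0 : Iic (0 : Fin 4) = {0} := by decide
  have h1 : Iic (1 : Fin 4) = {0, 1} := by decide
  have h2 : Iic (2 : Fin 4) = {0, 1, 2} := by decide
  have h3 : Iic (3 : Fin 4) = {0, 1, 2, 3} := by decide
  refine ⟨fun K => ?_, 2, ?_⟩
  · fin_cases K
    · simp [h0]
    · simp [h1]
    · simp [h2]
    · simp [h3]; norm_num
  · simp [h2]
end

section
/- The naïve Boston mechanism is upper invariant: for every setting, every agent i, every type profile (t_i, t_{-i}), and every type t_i' obtained from t_i by swapping two objects a, b that are adjacent in t_i with a ≻ b, the allocation to i of every object strictly preferred to a under t_i is unchanged, i.e., NBM_i(t_i, t_{-i})_j = NBM_i(t_i', t_{-i})_j for every object j with j ≻_{t_i} a. -/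
/-!
Upper invariance holds separately for every priority ordering `π`. The two reports of agent `i`
agree on all ranks below `k`, so the corresponding rounds of the mechanism produce identical
states. From rank `k` on, agent `i` never applies to `j` under either report, because `j` is
ranked above `k`; since an assigned agent keeps its object, those rounds do not change whether
`i` holds `j` (`foldl_applyRound_eq_some_iff`). Averaging over `π` gives the claim.
-/

open Finset

/-- A round in which `i` does not apply to `j` changes neither way whether `i` holds `j`. -/
lemma applyRound_eq_some_iff {n m : ℕ} (choice : Fin n → Option (Fin m)) (order : List (Fin n))
    (i : Fin n) (j : Fin m) (h : choice i ≠ some j)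
    (st : (Fin n → Option (Fin m)) × (Fin m → ℕ)) :
    (applyRound choice order st).1 i = some j ↔ st.1 i = some j := by
  unfold applyRound
  induction order generalizing st with
  | nil => rfl
  | cons x l ih =>
    rw [List.foldl_cons, ih]
    split
    · rfl
    · rename_i hx
      split
      · rfl
      · rename_i y hy
        split_ifs
        · by_cases hxi : i = x
          · subst hxi
            rw [hy] at h
            simp [hx, h]
          · simp [hxi]
        · rfl

lemma foldl_applyRound_eq_some_iff {n m : ℕ} (t : Fin n → Pref m) (order : List (Fin n))
    (i : Fin n) (j : Fin m) (l : List (Fin m)) (h : ∀ x ∈ l, t i x ≠ j)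
    (st : (Fin n → Option (Fin m)) × (Fin m → ℕ)) :
    (l.foldl (fun st k => applyRound (fun i => some (t i k)) order st) st).1 i = some j ↔
      st.1 i = some j := by
  induction l generalizing st with
  | nil => rfl
  | cons x l ih =>
    rw [List.foldl_cons, ih (fun y hy => h y (List.mem_cons_of_mem _ hy)),
      applyRound_eq_some_iff]
    simpa using h x List.mem_cons_self

/-- Running rounds in increasing order from a common state, two profiles that agree on the ranks
below `k`, and under which `i` never applies to `j` from rank `k` on, assign `j` to `i`
simultaneously. -/
lemma foldl_applyRound_congr {n m : ℕ} (t t' : Fin n → Pref m) (order : List (Fin n))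
    (i : Fin n) (j k : Fin m) (hlt : ∀ x < k, ∀ a, t a x = t' a x)
    (hge : ∀ x, k ≤ x → t i x ≠ j) (hge' : ∀ x, k ≤ x → t' i x ≠ j)
    (l : List (Fin m)) (hl : l.Pairwise (· < ·))
    (st : (Fin n → Option (Fin m)) × (Fin m → ℕ)) :
    (l.foldl (fun st k => applyRound (fun i => some (t i k)) order st) st).1 i = some j ↔
      (l.foldl (fun st k => applyRound (fun i => some (t' i k)) order st) st).1 i = some j := by
  induction l generalizing st with
  | nil => rfl
  | cons x l ih =>
    rw [List.pairwise_cons] at hl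
    rcases lt_or_ge x k with hx | hx
    · simp only [List.foldl_cons, hlt x hx]
      exact ih hl.2 _
    · have hmem : ∀ y ∈ x :: l, k ≤ y := by
        intro y hy
        rcases List.mem_cons.1 hy with rfl | hy
        · exact hx
        · exact hx.trans (hl.1 y hy).le
      rw [foldl_applyRound_eq_some_iff t _ _ _ _ (fun y hy => hge y (hmem y hy)),
        foldl_applyRound_eq_some_iff t' _ _ _ _ (fun y hy => hge' y (hmem y hy))]

/-- NBM is upper invariant: swapping two adjacent objects
`a = t i k ≻ b = t i k'` (with `k' = k + 1`) in agent `i`'s report leaves `i`'s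
allocation of every object strictly preferred to `a` unchanged. -/
theorem nbm_upper_invariant (n m : ℕ) (q : Fin m → ℕ) (hq : n ≤ ∑ j, q j)
    (t : Fin n → Pref m) (i : Fin n) (k k' : Fin m) (hkk' : (k : ℕ) + 1 = (k' : ℕ))
    (j : Fin m) (hj : (t i).symm j < k) :
    NBM q t i j = NBM q (Function.update t i ((Equiv.swap k k').trans (t i))) i j := by
  have hk : k < k' := by
    rw [Fin.lt_def]
    omega
  have hge : ∀ x, k ≤ x → t i x ≠ j := by
    rintro x hx rfl
    rw [Equiv.symm_apply_apply] at hj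
    exact absurd hj hx.not_gt
  unfold NBM
  congr 1
  refine Finset.sum_congr rfl fun π _ => ?_
  unfold detAlloc NBMassign
  refine if_congr (foldl_applyRound_congr _ _ _ i j k ?_ hge ?_ _
    (List.pairwise_lt_finRange m) _) rfl rfl
  · intro x hx a
    by_cases ha : a = i
    · subst ha
      simp [Equiv.swap_apply_of_ne_of_ne hx.ne (hx.trans hk).ne]
    · simp [ha]
  · intro x hx
    rw [Function.update_self, Equiv.trans_apply]
    -- The swap maps the set of ranks at least `k` into itself.
    apply hge
    rw [Equiv.swap_apply_def]
    split_ifs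
    exacts [hk.le, le_rfl, hx]
end

section
/- For every setting, every type profile t, and every priority ordering π, there exists a priority ordering π' such that NBM_π(t) = SD_{π'}(t); in particular, the deterministic allocation NBM_π(t) is ex-post efficient at t. -/
/-!
Write down the agents in the order in which the Boston run assigns them an object. When an
agent obtains its `k`-th choice in round `k`, it has been rejected by all its better choices,
and capacities never grow, so these are exhausted: the object obtained is the agent's favorite
among those still available. Hence the serial dictatorship along this order goes through the
same states. An agent that is never assigned has been rejected everywhere, so it can be
appended at the end, where it receives nothing (`NBMassign_eq_SDassign`).

A serial dictatorship is efficient because a feasible weak improvement `y` must agree with it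
agent by agent: as long as the earlier agents receive their objects under `y`, feasibility of
`y` keeps the object `y i` available for the next agent `i`, whose favorite is then both at
least as good as `y i` and no better (`foldl_sdStep_eq_of_dominates`).
-/

open Finset

/-! ### Single steps of the two mechanisms -/

/-- One step of the serial dictatorship: agent `i` takes a copy of its favorite object
among those with remaining capacity, and nothing happens if there is none. -/
def sdStep {n m : ℕ} (t : Fin n → Pref m)
    (s : (Fin n → Option (Fin m)) × (Fin m → ℕ)) (i : Fin n) :
    (Fin n → Option (Fin m)) × (Fin m → ℕ) :=
  match favorite (t i) s.2 with
  | none => s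
  | some j => (Function.update s.1 i (some j), Function.update s.2 j (s.2 j - 1))

/-- One application within a Boston round: agent `i`, if still unassigned, receives a copy
of `choice i` provided one is left. -/
def bostonStep {n m : ℕ} (choice : Fin n → Fin m)
    (s : (Fin n → Option (Fin m)) × (Fin m → ℕ)) (i : Fin n) :
    (Fin n → Option (Fin m)) × (Fin m → ℕ) :=
  if s.1 i = none ∧ 0 < s.2 (choice i) then
    (Function.update s.1 i (some (choice i)),
      Function.update s.2 (choice i) (s.2 (choice i) - 1))
  else s

theorem SDassign_eq {n m : ℕ} (q : Fin m → ℕ) (t : Fin n → Pref m)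
    (π : Equiv.Perm (Fin n)) :
    SDassign q t π = ((priorityList π).foldl (sdStep t) ((fun _ => none), q)).1 := rfl

theorem applyRound_eq {n m : ℕ} (choice : Fin n → Fin m) (l : List (Fin n))
    (s : (Fin n → Option (Fin m)) × (Fin m → ℕ)) :
    applyRound (fun i => some (choice i)) l s = l.foldl (bostonStep choice) s := by
  unfold applyRound
  congr 1
  funext s i
  unfold bostonStep
  cases h : s.1 i <;> simp

/-! ### Favorite objects -/

theorem favorite_eq_none_iff {m : ℕ} (ti : Pref m) (cap : Fin m → ℕ) :
    favorite ti cap = none ↔ ∀ k, cap (ti k) = 0 := by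
  simp [favorite]

theorem favorite_eq_some_iff {m : ℕ} (ti : Pref m) (cap : Fin m → ℕ) (k : Fin m) :
    favorite ti cap = some (ti k) ↔ 0 < cap (ti k) ∧ ∀ k' < k, cap (ti k') = 0 := by
  have h : favorite ti cap = some (ti k) ↔
      (List.finRange m).find? (fun k => decide (0 < cap (ti k))) = some k := by
    unfold favorite
    rw [← Option.map_some, (Option.map_injective ti.injective).eq_iff]
  rw [h, List.find?_eq_some_iff_getElem]
  constructor
  · rintro ⟨h0, i, hi, hk, hlt⟩
    simp only [List.getElem_finRange] at hk hlt
    subst hk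
    refine ⟨by simpa using h0, fun k' hk' => ?_⟩
    have := hlt k'.1 (by simpa [Fin.lt_def] using hk')
    simpa using this
  · rintro ⟨h0, hlt⟩
    refine ⟨by simpa using h0, k.1, by simp, by simp, fun j hj => ?_⟩
    have := hlt ⟨j, hj.trans k.2⟩ hj
    simp [this]

/-! ### The naïve Boston mechanism as a serial dictatorship -/

/-- The invariant of the Boston run: `L` lists the assigned agents in the order of their
assignment, the serial dictatorship run along `L` produces the current state `s`, and an
unassigned agent `i` has already been rejected everywhere it was due to apply: its `k`-th
ranked object is exhausted whenever `D i k`. -/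
structure BostonInv {n m : ℕ} (q : Fin m → ℕ) (t : Fin n → Pref m)
    (D : Fin n → Fin m → Prop) (L : List (Fin n))
    (s : (Fin n → Option (Fin m)) × (Fin m → ℕ)) : Prop where
  nodup : L.Nodup
  mem_iff : ∀ i, i ∈ L ↔ s.1 i ≠ none
  sd : L.foldl (sdStep t) ((fun _ => none), q) = s
  exhausted : ∀ i, s.1 i = none → ∀ k, D i k → s.2 (t i k) = 0

/-- When agent `i` applies to its `k`-th ranked object after having been rejected by all
better ones, a successful application is exactly a step of the serial dictatorship. -/
theorem BostonInv.step {n m : ℕ} {q : Fin m → ℕ} {t : Fin n → Pref m}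
    {D : Fin n → Fin m → Prop} {L : List (Fin n)}
    {s : (Fin n → Option (Fin m)) × (Fin m → ℕ)} (h : BostonInv q t D L s) (k : Fin m)
    (i : Fin n) (hD : ∀ k' < k, D i k') :
    ∃ L', BostonInv q t (fun a b => D a b ∨ (a = i ∧ b = k)) L'
      (bostonStep (fun i => t i k) s i) := by
  unfold bostonStep
  split_ifs with hc
  · obtain ⟨hi, hpos⟩ := hc
    have hiL : i ∉ L := fun hm => (h.mem_iff i).1 hm hi
    refine ⟨L ++ [i], ?_, ?_, ?_, ?_⟩
    · refine List.nodup_append.2 ⟨h.nodup, List.nodup_singleton i, ?_⟩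
      rintro a ha b hb rfl
      exact hiL (List.mem_singleton.1 hb ▸ ha)
    · intro a
      by_cases ha : a = i
      · simp [ha]
      · simp [ha, h.mem_iff]
    · rw [List.foldl_append, h.sd]
      have hf : favorite (t i) s.2 = some (t i k) :=
        (favorite_eq_some_iff _ _ _).2
          ⟨hpos, fun k' hk' => h.exhausted i hi k' (hD k' hk')⟩
      simp [sdStep, hf]
    · intro a ha b hb
      have hai : a ≠ i := by
        rintro rfl
        simp at ha
      have h0 : s.2 (t a b) = 0 := by
        refine h.exhausted a (by simpa [hai] using ha) b ?_
        tauto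
      simp only [Function.update_apply]
      split_ifs with hj
      · rw [← hj, h0]
      · exact h0
  · refine ⟨L, h.nodup, h.mem_iff, h.sd, ?_⟩
    rintro a ha b (hb | ⟨rfl, rfl⟩)
    · exact h.exhausted a ha b hb
    · by_contra h0
      exact hc ⟨ha, Nat.pos_of_ne_zero h0⟩

/-- A whole round, in which the agents of `l` apply to their `k`-th choices, preserves the
invariant; afterwards the unassigned agents of `l` have found that choice exhausted. -/
theorem BostonInv.round {n m : ℕ} {q : Fin m → ℕ} {t : Fin n → Pref m} (k : Fin m)
    (l : List (Fin n)) : ∀ {D : Fin n → Fin m → Prop} {L : List (Fin n)}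
    {s : (Fin n → Option (Fin m)) × (Fin m → ℕ)}, BostonInv q t D L s →
    (∀ i, ∀ k' < k, D i k') →
    ∃ L', BostonInv q t (fun a b => D a b ∨ (a ∈ l ∧ b = k)) L'
      (l.foldl (bostonStep (fun i => t i k)) s) := by
  induction l with
  | nil => intro D L s h _; exact ⟨L, by simpa using h⟩
  | cons i l ih =>
    intro D L s h hD
    obtain ⟨L₁, h₁⟩ := h.step k i (hD i)
    obtain ⟨L₂, h₂⟩ := ih h₁ (fun a k' hk' => Or.inl (hD a k' hk'))
    refine ⟨L₂, h₂.nodup, h₂.mem_iff, h₂.sd, fun a ha b hb => h₂.exhausted a ha b ?_⟩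
    simp only [List.mem_cons] at hb
    tauto

theorem mem_priorityList {n : ℕ} (π : Equiv.Perm (Fin n)) (i : Fin n) :
    i ∈ priorityList π := by
  simp only [priorityList, List.mem_map, List.mem_finRange, true_and]
  exact ⟨π i, by simp⟩

theorem nodup_priorityList {n : ℕ} (π : Equiv.Perm (Fin n)) : (priorityList π).Nodup :=
  (List.nodup_finRange n).map π.symm.injective

/-- Every enumeration of the agents without repetition is the priority list of some
priority ordering. -/
theorem exists_priorityList_eq {n : ℕ} (l : List (Fin n)) (hl : l.Nodup)
    (hm : ∀ i, i ∈ l) : ∃ π : Equiv.Perm (Fin n), priorityList π = l := by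
  have hlen : l.length = n := by
    have h := List.toFinset_card_of_nodup hl
    rw [show l.toFinset = Finset.univ from by ext; simp [hm]] at h
    simpa using h.symm
  let e : Fin n ≃ Fin n := (finCongr hlen.symm).trans (hl.getEquivOfForallMemList l hm)
  refine ⟨e.symm, ?_⟩
  apply List.ext_getElem
  · simp [priorityList, hlen]
  · intro k h₁ h₂
    simp [priorityList, e]

/-- After `r` complete rounds every unassigned agent has found its first `r` choices
exhausted. -/
theorem exists_inv_rounds {n m : ℕ} (q : Fin m → ℕ) (t : Fin n → Pref m)
    (π : Equiv.Perm (Fin n)) (r : ℕ) (hr : r ≤ m) :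
    ∃ L, BostonInv q t (fun _ k => k.1 < r) L
      (((List.finRange m).take r).foldl
        (fun st k => applyRound (fun i => some (t i k)) (priorityList π) st)
        ((fun _ => none), q)) := by
  induction r with
  | zero => exact ⟨[], by simp, by simp, by simp, by simp⟩
  | succ r ih =>
    obtain ⟨L, h⟩ := ih (by omega)
    have hlt : r < (List.finRange m).length := by simpa using hr
    rw [List.take_succ_eq_append_getElem hlt, List.foldl_append]
    simp only [List.foldl_cons, List.foldl_nil, List.getElem_finRange, applyRound_eq] at h ⊢
    obtain ⟨L', h'⟩ := h.round ⟨r, hr⟩ (priorityList π) (fun _ _ hk => hk)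
    refine ⟨L', h'.nodup, h'.mem_iff, h'.sd, fun a ha b hb => h'.exhausted a ha b ?_⟩
    rcases Nat.lt_succ_iff_lt_or_eq.1 hb with hb | hb
    · exact Or.inl hb
    · exact Or.inr ⟨mem_priorityList π a, Fin.ext hb⟩

theorem NBMassign_eq_SDassign {n m : ℕ} (q : Fin m → ℕ) (t : Fin n → Pref m)
    (π : Equiv.Perm (Fin n)) :
    ∃ π' : Equiv.Perm (Fin n), NBMassign q t π = SDassign q t π' := by
  obtain ⟨L, h⟩ := exists_inv_rounds q t π m le_rfl
  rw [List.take_of_length_le (by simp)] at h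
  set s := (List.finRange m).foldl
    (fun st k => applyRound (fun i => some (t i k)) (priorityList π) st)
    ((fun _ => none), q) with hs
  -- Agents left unassigned come last; everything on their lists is exhausted.
  obtain ⟨π', hπ'⟩ := exists_priorityList_eq
    (L ++ (List.finRange n).filter (fun i => i ∉ L))
    (by
      refine List.nodup_append.2 ⟨h.nodup, (List.nodup_finRange n).filter _, ?_⟩
      rintro a ha b hb rfl
      simp [ha] at hb)
    (fun i => by simp [em])
  refine ⟨π', ?_⟩
  have hrest : ∀ l : List (Fin n), (∀ i ∈ l, i ∉ L) → l.foldl (sdStep t) s = s := by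
    intro l
    induction l with
    | nil => intro _; rfl
    | cons i l ih =>
      intro hl
      have hi : s.1 i = none := by
        by_contra hne
        exact hl i (by simp) ((h.mem_iff i).2 hne)
      have hf : favorite (t i) s.2 = none :=
        (favorite_eq_none_iff _ _).2 fun k => h.exhausted i hi k k.2
      have hstep : sdStep t s i = s := by simp [sdStep, hf]
      rw [List.foldl_cons, hstep]
      exact ih fun a ha => hl a (by simp [ha])
  rw [SDassign_eq, hπ', List.foldl_append, h.sd, hrest _ (by simp)]
  rfl

/-! ### Efficiency of serial dictatorships -/

theorem sdStep_fst_of_ne {n m : ℕ} (t : Fin n → Pref m)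
    (s : (Fin n → Option (Fin m)) × (Fin m → ℕ)) {i a : Fin n} (h : a ≠ i) :
    (sdStep t s i).1 a = s.1 a := by
  unfold sdStep
  split <;> simp [h]

theorem foldl_sdStep_fst_of_notMem {n m : ℕ} (t : Fin n → Pref m) (l : List (Fin n))
    {a : Fin n} : ∀ s : (Fin n → Option (Fin m)) × (Fin m → ℕ), a ∉ l →
    (l.foldl (sdStep t) s).1 a = s.1 a := by
  induction l with
  | nil => intro s _; rfl
  | cons i l ih =>
    intro s ha
    rw [List.mem_cons, not_or] at ha
    rw [List.foldl_cons, ih _ ha.2, sdStep_fst_of_ne t s ha.1]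

/-- If `y` fits into the remaining capacities and is weakly better than the outcome of the
serial dictatorship for the agents still to be served, then it coincides with that outcome:
the next agent `i` finds `y i` available, so its favorite is at least as good as `y i`, hence
equal to it, and `y` on the later agents still fits into what is left. -/
theorem foldl_sdStep_eq_of_dominates {n m : ℕ} (t : Fin n → Pref m) (y : Fin n → Fin m)
    (l : List (Fin n)) (hl : l.Nodup) :
    ∀ s : (Fin n → Option (Fin m)) × (Fin m → ℕ),
    (∀ j, (l.map y).count j ≤ s.2 j) →
    (∀ i ∈ l, ∀ j, (l.foldl (sdStep t) s).1 i = some j →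
      (t i).symm (y i) ≤ (t i).symm j) →
    ∀ i ∈ l, (l.foldl (sdStep t) s).1 i = some (y i) := by
  induction l with
  | nil => simp
  | cons i l ih =>
    intro s hcap hdom
    rw [List.nodup_cons] at hl
    have hpos : 0 < s.2 (y i) := by
      have := hcap (y i)
      simp only [List.map_cons, List.count_cons_self] at this
      omega
    obtain ⟨j, hj⟩ : ∃ j, favorite (t i) s.2 = some j := by
      rw [← Option.ne_none_iff_exists']
      intro hn
      have := (favorite_eq_none_iff _ _).1 hn ((t i).symm (y i))
      rw [Equiv.apply_symm_apply] at this
      omega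
    have hstep : sdStep t s i =
        (Function.update s.1 i (some j), Function.update s.2 j (s.2 j - 1)) := by
      simp [sdStep, hj]
    have hfin : ((i :: l).foldl (sdStep t) s).1 i = some j := by
      rw [List.foldl_cons, foldl_sdStep_fst_of_notMem t l _ hl.1, hstep]
      simp
    have hle := hdom i (by simp) j hfin
    have hge : (t i).symm j ≤ (t i).symm (y i) := by
      by_contra! hlt
      rw [← (t i).apply_symm_apply j] at hj
      have := ((favorite_eq_some_iff _ _ _).1 hj).2 _ hlt
      rw [Equiv.apply_symm_apply] at this
      omega
    have hjy : j = y i := (t i).symm.injective (le_antisymm hge hle)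
    subst hjy
    intro a ha
    rcases List.mem_cons.1 ha with rfl | ha
    · exact hfin
    · rw [List.foldl_cons]
      refine ih hl.2 _ (fun j => ?_) (fun b hb => ?_) a ha
      · have := hcap j
        rw [hstep]
        simp only [List.map_cons, List.count_cons, beq_iff_eq] at this
        simp only [Function.update_apply]
        split_ifs at this ⊢ with h1 h2 h2
        all_goals grind
      · exact hdom b (by simp [hb])

theorem SDassign_efficient {n m : ℕ} (q : Fin m → ℕ) (t : Fin n → Pref m)
    (π : Equiv.Perm (Fin n)) : ExPostEfficientAt q t (SDassign q t π) := by
  rintro ⟨y, hy, hdom, i, j, hij, hlt⟩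
  have hcap : ∀ j, ((priorityList π).map y).count j ≤ q j := by
    intro j
    refine le_trans (le_of_eq ?_) (hy j)
    have hnd := (nodup_priorityList π).filter (fun i => decide (y i = j))
    rw [List.count, List.countP_map, List.countP_eq_length_filter]
    have h := List.toFinset_card_of_nodup hnd
    rw [show ((priorityList π).filter (fun i => decide (y i = j))).toFinset =
      Finset.univ.filter (fun i => y i = j) from by ext; simp [mem_priorityList]] at h
    rw [h]
    congr 1
  have h := foldl_sdStep_eq_of_dominates t y (priorityList π) (nodup_priorityList π)
    ((fun _ => none), q) hcap (fun i _ j hj => hdom i j hj) i (mem_priorityList π i)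
  rw [← SDassign_eq, hij, Option.some.injEq] at h
  exact absurd hlt (by simp [h])

/-- for every setting, type profile and priority ordering `π`, there is a
priority ordering `π'` with `NBM_π(t) = SD_{π'}(t)`; in particular `NBM_π(t)` is
ex-post efficient at `t`. -/
theorem nbm_pi_is_sd_and_ex_post_efficient (n m : ℕ) (q : Fin m → ℕ)
    (hq : n ≤ ∑ j, q j) (t : Fin n → Pref m) (π : Equiv.Perm (Fin n)) :
    (∃ π' : Equiv.Perm (Fin n), NBMassign q t π = SDassign q t π') ∧
      ExPostEfficientAt q t (NBMassign q t π) := by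
  obtain ⟨π', h⟩ := NBMassign_eq_SDassign q t π
  exact ⟨⟨π', h⟩, h ▸ SDassign_efficient q t π'⟩
end

section
/- The naïve Boston mechanism is not ordinally efficient: there exist a setting (namely 4 agents and 4 objects, each object of capacity 1) and a type profile t such that some allocation strictly ordinally dominates NBM(t) at t. -/
/-!
With objects `0, 1, 2, 3`, let agents `0` and `1` both rank object `0` first and agents `2` and `3`
both rank object `2` first.  Agents `0` and `2` prefer `1` to `3`, whereas agents `1` and `3` prefer
`3` to `1`.

Each popular object is split evenly within its pair in the first round.  The two losers then compete
for objects `1` and `3`.  When they want the same object, which has probability `1/2`, the loser of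
the tie-break is left with the other one, so every agent gets its preferred object among `{1, 3}`
with probability `3/8` and the other with probability `1/8`.  Trading these shares of `1/8` gives
every agent its first choice and its preferred object among `{1, 3}` with probability `1/2` each,
a strict improvement for everyone.

The matrix of the mechanism is computed by counting the priority orderings under which a given agent
receives a given object (`card_assign`), a finite check.
-/

open Finset

/-- The type profile: `0 ≻ 1 ≻ 2 ≻ 3`, `0 ≻ 3 ≻ 1 ≻ 2`, `2 ≻ 1 ≻ 3 ≻ 0` and `2 ≻ 3 ≻ 1 ≻ 0`. Each
nontrivial permutation is given by its values together with the values of its inverse. -/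
def exProfile : Fin 4 → Pref 4 :=
  ![Equiv.refl _,
    ⟨![0, 3, 1, 2], ![0, 2, 3, 1], by decide, by decide⟩,
    ⟨![2, 1, 3, 0], ![3, 1, 0, 2], by decide, by decide⟩,
    ⟨![2, 3, 1, 0], ![3, 2, 0, 1], by decide, by decide⟩]

/-- The number, out of `24`, of priority orderings for which agent `i` gets object `j`. -/
def exCount : Fin 4 → Fin 4 → ℕ :=
  ![![12, 9, 0, 3], ![12, 3, 0, 9], ![0, 9, 12, 3], ![0, 3, 12, 9]]

/-- The dominating allocation multiplied by `24`; no agent gets its less preferred object among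
`1` and `3`. -/
def exAlt : Fin 4 → Fin 4 → ℕ :=
  ![![12, 12, 0, 0], ![12, 0, 0, 12], ![0, 12, 12, 0], ![0, 0, 12, 12]]

lemma card_assign (i j : Fin 4) :
    (univ.filter fun π : Equiv.Perm (Fin 4) =>
      NBMassign (fun _ => 1) exProfile π i = some j).card = exCount i j := by
  revert i j
  decide +kernel

lemma NBM_exProfile (i j : Fin 4) :
    NBM (fun _ => 1) exProfile i j = (exCount i j : ℝ) / 24 := by
  simp only [NBM, detAlloc, Finset.sum_boole, card_assign]
  norm_num [Nat.factorial]

lemma isAlloc_exAlt : IsAlloc (fun _ => 1) fun i j => (exAlt i j : ℝ) / 24 := by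
  have hle : ∀ i j, exAlt i j ≤ 24 := by decide
  have hrow : ∀ i, ∑ j, exAlt i j = 24 := by decide
  have hcol : ∀ j, ∑ i, exAlt i j ≤ 24 := by decide
  refine ⟨fun i j => ⟨by positivity, ?_⟩, fun i => ?_, fun j => ?_⟩
  · rw [div_le_one (by norm_num)]
    exact_mod_cast hle i j
  · rw [← Finset.sum_div, div_eq_one_iff_eq (by norm_num)]
    exact_mod_cast hrow i
  · rw [← Finset.sum_div, Nat.cast_one, div_le_one (by norm_num)]
    exact_mod_cast hcol j

/-- NBM is not ordinally efficient: in the setting with 4 agents and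
4 objects of unit capacity there are a type profile `t` and an allocation `y` that
strictly ordinally dominates `NBM(t)` at `t`. -/
theorem nbm_not_ordinally_efficient :
    ∃ (t : Fin 4 → Pref 4) (y : Fin 4 → Fin 4 → ℝ),
      IsAlloc (fun _ => 1) y ∧ StrictOrdDom t y (NBM (fun _ => 1) t) := by
  have hdom : ∀ i K, ∑ k ∈ Iic K, exCount i (exProfile i k) ≤
      ∑ k ∈ Iic K, exAlt i (exProfile i k) := by decide
  -- Agent `0` gets object `0` or `1` with probability only `7/8` under the mechanism.
  have hstrict : ∑ k ∈ Iic 1, exCount 0 (exProfile 0 k) <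
      ∑ k ∈ Iic 1, exAlt 0 (exProfile 0 k) := by decide
  refine ⟨exProfile, fun i j => (exAlt i j : ℝ) / 24, isAlloc_exAlt, fun i K => ?_, 0, 1, ?_⟩
  · simp only [NBM_exProfile, ← Finset.sum_div]
    refine div_le_div_of_nonneg_right ?_ (by norm_num)
    exact_mod_cast hdom i K
  · simp only [NBM_exProfile, ← Finset.sum_div]
    refine div_lt_div_of_pos_right ?_ (by norm_num)
    exact_mod_cast hstrict
end

section
/- There exist a setting (namely 3 agents and 3 objects, each object of capacity 1) and a type profile t at which NBM(t) strictly rank dominates RSD(t). -/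
/-! The witness is the profile in which agents `0` and `1` rank the objects `0, 1, 2` and agent `2`
ranks them `1, 0, 2`.  Under the Boston mechanism agent `2` applies to object `1` in the first round
without competition, so for every priority ordering two agents get their first choice and the
remaining one its third: the cumulative rank counts are `2, 2, 3`.  Under serial dictatorship they are
also `2, 2, 3` unless agent `2` comes last, in which case the second agent takes object `1` and they
drop to `1, 2, 3`.  Hence the comparison holds for every single priority ordering
(`cumRank_sd_le_nbm`) and is strict for the identity ordering (`cumRank_sd_lt_nbm`).
Cumulative rank distributions are averages of these counts (`sum_rankDist_avg`), so averaging over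
the priority orderings gives strict rank dominance. -/

open Finset

/-- The number of agents receiving one of their choices `0, …, K` under the assignment `a`. -/
def cumRank {n m : ℕ} (t : Fin n → Pref m) (a : Fin n → Option (Fin m)) (K : Fin m) : ℕ :=
  ∑ k ∈ Finset.Iic K, ∑ i, if a i = some (t i k) then 1 else 0

/-- The cumulative rank distribution is linear: for an average of deterministic assignments over all
priority orderings it is the average of the cumulative rank counts. -/
lemma sum_rankDist_avg {n m : ℕ} (t : Fin n → Pref m)
    (f : Equiv.Perm (Fin n) → Fin n → Option (Fin m)) (K : Fin m) :
    ∑ k ∈ Finset.Iic K,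
        rankDist t (fun i j => (∑ π, detAlloc (f π) i j) / (Nat.factorial n)) k =
      ((∑ π, cumRank t (f π) K : ℕ) : ℝ) / (Nat.factorial n) := by
  simp only [rankDist, detAlloc, cumRank, ← Finset.sum_div]
  push_cast
  congr 1
  rw [Finset.sum_comm (s := Finset.univ (α := Equiv.Perm (Fin n)))]
  exact Finset.sum_congr rfl fun k _ => Finset.sum_comm

/-- Agents `0` and `1` rank the objects `0, 1, 2`; agent `2` ranks them `1, 0, 2`. -/
def witnessProfile : Fin 3 → Pref 3 :=
  ![Equiv.refl _, Equiv.refl _, Equiv.swap 0 1]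

set_option maxRecDepth 100000 in
lemma cumRank_sd_le_nbm : ∀ (π : Equiv.Perm (Fin 3)) (K : Fin 3),
    cumRank witnessProfile (SDassign (fun _ => 1) witnessProfile π) K ≤
      cumRank witnessProfile (NBMassign (fun _ => 1) witnessProfile π) K := by
  decide

set_option maxRecDepth 100000 in
lemma cumRank_sd_lt_nbm :
    cumRank witnessProfile (SDassign (fun _ => 1) witnessProfile 1) 0 <
      cumRank witnessProfile (NBMassign (fun _ => 1) witnessProfile 1) 0 := by
  decide

/-- in the setting with 3 agents and 3 objects of unit capacity there is
a type profile at which `NBM(t)` strictly rank dominates `RSD(t)`. -/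
theorem nbm_strictly_rank_dominates_rsd_somewhere :
    ∃ t : Fin 3 → Pref 3,
      StrictRankDom t (NBM (fun _ => 1) t) (RSD (fun _ => 1) t) := by
  refine ⟨witnessProfile, fun K => ?_, 0, ?_⟩
  · unfold NBM RSD
    rw [sum_rankDist_avg, sum_rankDist_avg]
    gcongr with π
    exact cumRank_sd_le_nbm π K
  · unfold NBM RSD
    rw [sum_rankDist_avg, sum_rankDist_avg]
    have h := Finset.sum_lt_sum (fun π (_ : π ∈ Finset.univ) => cumRank_sd_le_nbm π 0)
      ⟨1, Finset.mem_univ _, cumRank_sd_lt_nbm⟩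
    gcongr
end

section
/- The adaptive Boston mechanism is upper invariant: for every setting, every agent i, every type profile (t_i, t_{-i}), and every type t_i' obtained from t_i by swapping two objects a, b that are adjacent in t_i with a ≻ b, the allocation to i of every object strictly preferred to a under t_i is unchanged, i.e., ABM_i(t_i, t_{-i})_j = ABM_i(t_i', t_{-i})_j for every object j with j ≻_{t_i} a. -/
/-! The claim holds for every fixed priority ordering `π`, so averaging is harmless.

Run the mechanism on both profiles in parallel. As long as `j`, which agent `i` ranks above both
swapped objects, has positive capacity at the start of a round, `i`'s favorite available object has
rank at most that of `j`, where the two reports agree (`favorite_congr`); hence the two runs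
coincide. Once the capacity of `j` is zero it stays zero, so whether `i` holds `j` is settled for
good in both runs (`applyRound_keep`, `applyRound_dead`). The relation `Coupled` is this invariant,
and `coupled_step` its preservation. -/

open Finset

/-- In an increasing list, searching for the first element satisfying a predicate only depends on
the predicate (and the read-out map) up to any known witness `a`. -/
lemma find_map_congr {m : ℕ} {β : Type*} (p p' : Fin m → Bool) (f f' : Fin m → β) (a : Fin m)
    (hpa : p a = true) (hp : ∀ x ≤ a, p x = p' x) (hf : ∀ x ≤ a, f x = f' x) (l : List (Fin m))
    (hl : l.Pairwise (· < ·)) (ha : a ∈ l) :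
    (l.find? p).map f = (l.find? p').map f' := by
  induction l with
  | nil => simp at ha
  | cons x l ih =>
    rw [List.pairwise_cons] at hl
    have hxa : x ≤ a := by
      rcases List.mem_cons.1 ha with h | h
      · exact h.ge
      · exact (hl.1 a h).le
    cases hx : p x with
    | true =>
      have hx' : p' x = true := by rw [← hp x hxa, hx]
      simp [hx, hx', hf x hxa]
    | false =>
      have hx' : p' x = false := by rw [← hp x hxa, hx]
      have hal : a ∈ l := by
        rcases List.mem_cons.1 ha with h | h
        · rw [h, hx] at hpa
          exact absurd hpa (by simp)
        · exact h
      simpa [hx, hx'] using ih hl.2 hal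

lemma favorite_congr {m : ℕ} (u u' : Pref m) (cap : Fin m → ℕ) (a : Fin m)
    (ha : 0 < cap (u a)) (h : ∀ x ≤ a, u x = u' x) : favorite u cap = favorite u' cap := by
  unfold favorite
  refine find_map_congr _ _ _ _ a (by simpa using ha) (fun x hx => by rw [h x hx]) h _
    ?_ (List.mem_finRange a)
  exact List.pairwise_lt_finRange m

lemma applyRound_keep {n m : ℕ} (c : Fin n → Option (Fin m)) (o : List (Fin n))
    (s : (Fin n → Option (Fin m)) × (Fin m → ℕ)) (i : Fin n) (j : Fin m)
    (h : s.1 i = some j) : (applyRound c o s).1 i = some j := by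
  unfold applyRound
  induction o generalizing s with
  | nil => exact h
  | cons x o ih =>
    rw [List.foldl_cons]
    apply ih
    cases hx : s.1 x with
    | some y => simpa using h
    | none =>
      have hne : i ≠ x := by
        rintro rfl
        simp [h] at hx
      cases hc : c x with
      | none => simpa using h
      | some y =>
        by_cases hy : 0 < s.2 y <;> simp [hy, h, Function.update_of_ne hne]

/-- An exhausted object stays exhausted and is never handed out again. -/
lemma applyRound_dead {n m : ℕ} (c : Fin n → Option (Fin m)) (o : List (Fin n))
    (s : (Fin n → Option (Fin m)) × (Fin m → ℕ)) (i : Fin n) (j : Fin m)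
    (h0 : s.2 j = 0) (h : s.1 i ≠ some j) :
    (applyRound c o s).2 j = 0 ∧ (applyRound c o s).1 i ≠ some j := by
  unfold applyRound
  induction o generalizing s with
  | nil => exact ⟨h0, h⟩
  | cons x o ih =>
    rw [List.foldl_cons]
    cases hx : s.1 x with
    | some y => exact ih s h0 h
    | none =>
      cases hc : c x with
      | none => exact ih s h0 h
      | some y =>
        by_cases hy : 0 < s.2 y
        · have hjy : j ≠ y := by
            rintro rfl
            omega
          simp only [hy, if_true]
          apply ih
          · simpa [Function.update_of_ne hjy] using h0
          · by_cases hix : i = x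
            · subst hix
              simpa using hjy.symm
            · simpa [Function.update_of_ne hix] using h
        · simp only [hy, if_false]
          exact ih s h0 h

/-- Two states of the mechanism are coupled if they are equal, or if the question whether `i`
receives `j` is already settled, with the same answer, in both. -/
def Coupled {n m : ℕ} (i : Fin n) (j : Fin m)
    (s s' : (Fin n → Option (Fin m)) × (Fin m → ℕ)) : Prop :=
  s = s' ∨ (s.1 i = some j ∧ s'.1 i = some j) ∨
    ((s.2 j = 0 ∧ s.1 i ≠ some j) ∧ (s'.2 j = 0 ∧ s'.1 i ≠ some j))

lemma coupled_step {n m : ℕ} (i : Fin n) (j : Fin m) (t t' : Fin n → Pref m)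
    (ht : ∀ x, x ≠ i → t x = t' x) (hti : ∀ x ≤ (t i).symm j, t i x = t' i x)
    (o : List (Fin n)) (s s' : (Fin n → Option (Fin m)) × (Fin m → ℕ)) (h : Coupled i j s s') :
    Coupled i j (applyRound (fun x => favorite (t x) s.2) o s)
      (applyRound (fun x => favorite (t' x) s'.2) o s') := by
  rcases h with rfl | ⟨h, h'⟩ | ⟨⟨h0, h⟩, h0', h'⟩
  · rcases Nat.eq_zero_or_pos (s.2 j) with h0 | h0
    · by_cases h : s.1 i = some j
      · exact Or.inr (Or.inl ⟨applyRound_keep _ _ _ _ _ h, applyRound_keep _ _ _ _ _ h⟩)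
      · exact Or.inr (Or.inr ⟨applyRound_dead _ _ _ _ _ h0 h, applyRound_dead _ _ _ _ _ h0 h⟩)
    · left
      congr 1
      funext x
      by_cases hx : x = i
      · subst hx
        exact favorite_congr _ _ _ ((t x).symm j) (by simpa using h0) hti
      · rw [ht x hx]
  · exact Or.inr (Or.inl ⟨applyRound_keep _ _ _ _ _ h, applyRound_keep _ _ _ _ _ h'⟩)
  · exact Or.inr (Or.inr ⟨applyRound_dead _ _ _ _ _ h0 h, applyRound_dead _ _ _ _ _ h0' h'⟩)

/-- Upper invariance for a fixed priority ordering: if only `i`'s report changes, and only below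
`j`, then `i` receives `j` before the change iff it does so after. -/
lemma ABMassign_iff {n m : ℕ} (q : Fin m → ℕ) (i : Fin n) (j : Fin m) (t t' : Fin n → Pref m)
    (ht : ∀ x, x ≠ i → t x = t' x) (hti : ∀ x ≤ (t i).symm j, t i x = t' i x)
    (π : Equiv.Perm (Fin n)) :
    ABMassign q t π i = some j ↔ ABMassign q t' π i = some j := by
  have key : ∀ r : ℕ, Coupled i j
      ((fun st => applyRound (fun x => favorite (t x) st.2) (priorityList π) st)^[r]
        ((fun _ => none), q))
      ((fun st => applyRound (fun x => favorite (t' x) st.2) (priorityList π) st)^[r]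
        ((fun _ => none), q)) := by
    intro r
    induction r with
    | zero => exact Or.inl rfl
    | succ r ih =>
      rw [Function.iterate_succ_apply', Function.iterate_succ_apply']
      exact coupled_step i j t t' ht hti _ _ _ ih
  unfold ABMassign
  rcases key n with h | ⟨h, h'⟩ | ⟨⟨_, h⟩, _, h'⟩
  · rw [h]
  · exact iff_of_true h h'
  · exact iff_of_false h h'

/-- ABM is upper invariant: swapping two adjacent objects
`a = t i k ≻ b = t i k'` (with `k' = k + 1`) in agent `i`'s report leaves `i`'s
allocation of every object strictly preferred to `a` unchanged. -/
theorem abm_upper_invariant (n m : ℕ) (q : Fin m → ℕ) (hq : n ≤ ∑ j, q j)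
    (t : Fin n → Pref m) (i : Fin n) (k k' : Fin m) (hkk' : (k : ℕ) + 1 = (k' : ℕ))
    (j : Fin m) (hj : (t i).symm j < k) :
    ABM q t i j = ABM q (Function.update t i ((Equiv.swap k k').trans (t i))) i j := by
  unfold ABM detAlloc
  congr 1
  refine Finset.sum_congr rfl fun π _ => ?_
  refine if_congr (ABMassign_iff q i j _ _ (fun x hx => ?_) (fun x hx => ?_) π) rfl rfl
  · rw [Function.update_of_ne hx]
  · have hxk : x < k := lt_of_le_of_lt hx hj
    have h1 : x ≠ k := hxk.ne
    have h2 : x ≠ k' := by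
      rintro rfl
      have : (x : ℕ) < k := hxk
      omega
    simp [Equiv.swap_apply_of_ne_of_ne h1 h2]
end
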